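/- Suppose C = (1, c_2, ..., c_n) is orderly, m ≥ 3, c_{m-1} > 2·c_{m-2}, and c_m > 2·c_{m-1}. Then for every t with m ≤ t < n, c_{t+1} - c_t ≥ c_m - c_{m-1}. -/

import Mathlib

/-- The largest coin value in `C` that is at most `v` (or 0 if none). -/
def coinMax (C : List ℕ) (v : ℕ) : ℕ := (C.filter (· ≤ v)).foldr max 0

/-- Fuelled greedy coin count. -/
def grdAux (C : List ℕ) : ℕ → ℕ → ℕ
  | 0, _ => 0
  | fuel + 1, v =>
    let c := coinMax C v
    if v = 0 ∨ c = 0 then 0 else 1 + grdAux C fuel (v - c)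

/-- Number of coins used by the greedy algorithm to represent `v` with coin system `C`. -/
def grd (C : List ℕ) (v : ℕ) : ℕ := grdAux C v v

/-- The set of sizes of representations of `v` as nonnegative integer combinations of
the coin values in `C`. -/
def reprCosts (C : List ℕ) (v : ℕ) : Set ℕ :=
  {k | ∃ x : List ℕ, x.length = C.length ∧ (List.zipWith (· * ·) x C).sum = v ∧ x.sum = k}

/-- Minimum number of coins needed to represent `v` with coin system `C`. -/
noncomputable def opt (C : List ℕ) (v : ℕ) : ℕ := sInf (reprCosts C v)

/-- A coin system is orderly if greedy is optimal for every positive value. -/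
def Orderly (C : List ℕ) : Prop := ∀ v : ℕ, 0 < v → grd C v = opt C v

theorem exists_max_nat (Q : ℕ → Prop) (N : ℕ) (hN : ∀ x, Q x → x ≤ N) (h : ∃ x, Q x) :
    ∃ x, Q x ∧ ∀ y, Q y → y ≤ x := by
  classical
  obtain ⟨x, hx⟩ := h
  exact ⟨Nat.findGreatest Q N, Nat.findGreatest_spec (hN x hx) hx,
    fun y hy => Nat.le_findGreatest (hN y hy) hy⟩

/-- The combinatorial core: a finite set of naturals in which the sum of two elements differs
from the largest element below it by an element or zero. -/
theorem core (S : ℕ → Prop) (N a b c : ℕ) (hN : ∀ x, S x → x ≤ N)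
    (hb : S b) (hc : S c) (hab : 2 * a < b) (hbc : 2 * b < c)
    (hK : ∀ x, S x → x < c → x ≤ a ∨ x = b)
    (hR : ∀ x y w r, S x → S y → S w → x + y = w + r →
      (∀ w', S w' → w' ≤ x + y → w' ≤ w) → r = 0 ∨ S r)
    (u0 u0' : ℕ) (hu0 : S u0) (hu0' : S u0') (hcu : c ≤ u0) (hlt : u0 < u0')
    (hgap : u0' + b < u0 + c) : False := by
  have hK' : ∀ x, (x = 0 ∨ S x) → x < c → x ≤ a ∨ x = b := by
    rintro x (rfl | h) hx
    · left; omega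
    · exact hK x h hx
  -- the largest violator
  obtain ⟨u, ⟨hu, hcu1, u', hu', huu', hug⟩, humax⟩ := exists_max_nat
    (fun x => S x ∧ c ≤ x ∧ ∃ y, S y ∧ x < y ∧ y + b < x + c) N (fun x h => hN x h.1)
    ⟨u0, hu0, hcu, u0', hu0', hlt, hgap⟩
  have sep : ∀ x y, S x → S y → u < x → x < y → x + c ≤ y + b := by
    intro x y hx hy h1 h2
    by_contra h
    have := humax x ⟨hx, by omega, y, hy, h2, by omega⟩
    omega
  have nobetw : ∀ x, S x → u < x → u' ≤ x := by
    intro x hx h1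
    by_contra h
    have := sep x u' hx hu' h1 (by omega)
    omega
  obtain ⟨u'', hu'', h3, h4⟩ : ∃ x, S x ∧ u' < x ∧ x ≤ u + c := by
    by_contra h
    push Not at h
    have h5 := hR u c u' (u + c - u') hu hc hu' (by omega) (by
      intro w hw hw2
      by_contra h6
      have := h w hw (by omega)
      omega)
    have := hK' _ h5 (by omega)
    omega
  have s1 := sep u' u'' hu' hu'' huu' h3
  obtain ⟨z, hz⟩ : ∃ z, u + c = u'' + z := ⟨u + c - u'', by omega⟩
  have hzK := hR u c u'' z hu hc hu'' hz (by
    intro w hw hw2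
    by_contra h6
    have := sep u'' w hu'' hw (by omega) (by omega)
    omega)
  have hza := hK' z hzK (by omega)
  have hdK := hR u b u' (u + b - u') hu hb hu' (by omega) (by
    intro w hw hw2
    by_contra h6
    have := sep u' w hu' hw (by omega) (by omega)
    omega)
  have hda := hK' _ hdK (by omega)
  have hdzK := hR u' c u'' (u' + c - u'') hu' hc hu'' (by omega) (by
    intro w hw hw2
    by_contra h6
    have := sep u'' w hu'' hw (by omega) (by omega)
    omega)
  have hdz := hK' _ hdzK (by omega)
  have hza' : z ≤ a := by omega
  have e1 : u' + z = u + b := by omega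
  have e2 : u'' + b = u' + c := by omega
  -- the last gap `c - b`
  obtain ⟨v, ⟨hv, huv, v', hv', hvv'⟩, hvmax⟩ := exists_max_nat
    (fun x => S x ∧ u < x ∧ ∃ y, S y ∧ y + b = x + c) N (fun x h => hN x h.1)
    ⟨u', hu', huu', u'', hu'', e2⟩
  have sep2 : ∀ x y, S x → S y → v < x → x < y → x + c ≤ y + a := by
    by_contra h
    push Not at h
    obtain ⟨x0, y0, hx0, hy0, g1, g2, g3⟩ := h
    obtain ⟨x, ⟨hx, hvx, y, hy, hxy, hg⟩, hxmax⟩ := exists_max_nat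
      (fun x => S x ∧ v < x ∧ ∃ y, S y ∧ x < y ∧ y + a < x + c) N (fun x h => hN x h.1)
      ⟨x0, hx0, g1, y0, hy0, g2, g3⟩
    have k1 := sep x y hx hy (by omega) hxy
    have k2 : y + b ≠ x + c := by
      intro h
      have := hvmax x ⟨hx, by omega, y, hy, h⟩
      omega
    have k3 := hR x c y (x + c - y) hx hc hy (by omega) (by
      intro w hw hw2
      by_contra h6
      have := hxmax y ⟨hy, by omega, w, hw, by omega, by omega⟩
      omega)
    have := hK' _ k3 (by omega)
    omega
  -- the minimal pair
  classical
  have hex : ∃ p, S p ∧ c ≤ p ∧ ∃ p', S p' ∧ p' + z = p + b := ⟨u, hu, hcu1, u', hu', e1⟩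
  obtain ⟨p, ⟨hp, hcp, p', hp', hpp'⟩, hpmin⟩ :
      ∃ p, (S p ∧ c ≤ p ∧ ∃ p', S p' ∧ p' + z = p + b) ∧
        ∀ q, (S q ∧ c ≤ q ∧ ∃ p', S p' ∧ p' + z = q + b) → p ≤ q :=
    ⟨Nat.find hex, Nat.find_spec hex, fun q hq => Nat.find_min' hex hq⟩
  obtain ⟨M, ⟨hM, hMA⟩, hMmax⟩ := exists_max_nat
    (fun x => S x ∧ x ≤ v + p) N (fun x h => hN x h.1) ⟨v, hv, by omega⟩
  have hMv := hMmax v' ⟨hv', by omega⟩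
  obtain ⟨k, hk⟩ : ∃ k, v + p = M + k := ⟨v + p - M, by omega⟩
  have hkK := hR v p M k hv hp hM hk (fun w hw hw2 => hMmax w ⟨hw, hw2⟩)
  by_cases hj : ∃ B, S B ∧ v + p < B ∧ B ≤ v + p'
  · obtain ⟨B, hB, j1, j2⟩ := hj
    have q1 := hR v p' B (v + p' - B) hv hp' hB (by omega) (by
      intro w hw hw2
      by_contra h6
      have := sep2 B w hB hw (by omega) (by omega)
      omega)
    have q2 := hK' _ q1 (by omega)
    have q3 := hR v' p' B (v' + p' - B) hv' hp' hB (by omega) (by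
      intro w hw hw2
      by_contra h6
      have := sep2 B w hB hw (by omega) (by omega)
      omega)
    have q4 := hK' _ q3 (by omega)
    omega
  · push Not at hj
    have q1 := hR v p' M (v + p' - M) hv hp' hM (by omega) (by
      intro w hw hw2
      by_contra h6
      by_cases h7 : w ≤ v + p
      · have := hMmax w ⟨hw, h7⟩
        omega
      · have := hj w hw (by omega)
        omega)
    have q2 : k < c := by
      by_contra h
      have h1 : S k := by
        rcases hkK with h | h
        · omega
        · exact h
      have h2 : S (v + p' - M) := by
        rcases q1 with h | h
        · omega
        · exact h
      have := hpmin k ⟨h1, by omega, _, h2, by omega⟩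
      omega
    have q3 := hK' k hkK q2
    have q4 := hK' _ q1 (by omega)
    have q5 : k = z := by omega
    have q6 := hR v' p M (v' + p - M) hv' hp hM (by omega) (by
      intro w hw hw2
      by_contra h6
      have := sep2 M w hM hw (by omega) (by omega)
      omega)
    have := hK' _ q6 (by omega)
    omega

theorem repr_add (C : List ℕ) : ∀ l₁ l₂ : List ℕ, l₁.length = C.length → l₂.length = C.length →
    ∃ l : List ℕ, l.length = C.length ∧ (List.zipWith (· * ·) l C).sum =
      (List.zipWith (· * ·) l₁ C).sum + (List.zipWith (· * ·) l₂ C).sum ∧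
      l.sum = l₁.sum + l₂.sum := by
  induction C with
  | nil =>
    intro l₁ l₂ h1 h2
    simp at h1 h2
    subst h1 h2
    exact ⟨[], by simp⟩
  | cons c C ih =>
    rintro (_ | ⟨x, l₁⟩) (_ | ⟨y, l₂⟩) h1 h2
    · simp at h1
    · simp at h1
    · simp at h2
    · obtain ⟨l, e1, e2, e3⟩ := ih l₁ l₂ (by simpa using h1) (by simpa using h2)
      refine ⟨(x + y) :: l, by simp [e1], ?_, ?_⟩
      · simp only [List.zipWith_cons_cons, List.sum_cons, e2]; ring
      · simp only [List.sum_cons, e3]; ring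

theorem repr_zero (C : List ℕ) : ∃ l : List ℕ, l.length = C.length ∧
    (List.zipWith (· * ·) l C).sum = 0 ∧ l.sum = 0 := by
  induction C with
  | nil => exact ⟨[], by simp⟩
  | cons c C ih =>
    obtain ⟨l, e1, e2, e3⟩ := ih
    exact ⟨0 :: l, by simp [e1], by simp [e2], by simp [e3]⟩

theorem repr_one (C : List ℕ) (x : ℕ) (hx : x ∈ C) : ∃ l : List ℕ, l.length = C.length ∧
    (List.zipWith (· * ·) l C).sum = x ∧ l.sum = 1 := by
  induction C with
  | nil => simp at hx
  | cons c C ih =>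
    rcases List.mem_cons.1 hx with rfl | h
    · obtain ⟨l, e1, e2, e3⟩ := repr_zero C
      exact ⟨1 :: l, by simp [e1], by simp [e2], by simp [e3]⟩
    · obtain ⟨l, e1, e2, e3⟩ := ih h
      exact ⟨0 :: l, by simp [e1], by simp [e2], by simp [e3]⟩

theorem opt_two (C : List ℕ) (x y : ℕ) (hx : x ∈ C) (hy : y ∈ C) : opt C (x + y) ≤ 2 := by
  obtain ⟨l₁, a1, a2, a3⟩ := repr_one C x hx
  obtain ⟨l₂, b1, b2, b3⟩ := repr_one C y hy
  obtain ⟨l, e1, e2, e3⟩ := repr_add C l₁ l₂ a1 b1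
  exact Nat.sInf_le ⟨l, e1, by rw [e2, a2, b2], by rw [e3, a3, b3]⟩

theorem foldr_max_spec (L : List ℕ) :
    (∀ x ∈ L, x ≤ L.foldr max 0) ∧ (L.foldr max 0 = 0 ∨ L.foldr max 0 ∈ L) := by
  induction L with
  | nil => simp
  | cons c L ih =>
    obtain ⟨h1, h2⟩ := ih
    simp only [List.foldr_cons, List.mem_cons]
    refine ⟨?_, ?_⟩
    · rintro x (rfl | h)
      · exact le_max_left _ _
      · exact (h1 x h).trans (le_max_right _ _)
    · rcases max_choice c (L.foldr max 0) with h | h <;> rw [h] <;> tauto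

theorem le_coinMax (C : List ℕ) (v x : ℕ) (hx : x ∈ C) (hv : x ≤ v) : x ≤ coinMax C v :=
  (foldr_max_spec _).1 x (by simp [hx, hv])

theorem coinMax_mem (C : List ℕ) (v : ℕ) :
    coinMax C v = 0 ∨ (coinMax C v ∈ C ∧ coinMax C v ≤ v) := by
  rcases (foldr_max_spec (C.filter (· ≤ v))).2 with h | h
  · exact Or.inl h
  · right
    simpa [coinMax] using h

theorem two_sum (C : List ℕ) (h1 : 1 ∈ C) (hord : Orderly C) (x y w r : ℕ)
    (hx : x ∈ C) (hy : y ∈ C) (hw : w ∈ C) (hs : x + y = w + r) (hpos : 0 < w)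
    (hmax : ∀ w' ∈ C, w' ≤ x + y → w' ≤ w) : r = 0 ∨ r ∈ C := by
  have hg : grd C (x + y) ≤ 2 := by
    rw [hord (x + y) (by omega)]
    exact opt_two C x y hx hy
  have hcm : coinMax C (x + y) = w := by
    have l1 := le_coinMax C (x + y) w hw (by omega)
    rcases coinMax_mem C (x + y) with h | ⟨h, h'⟩
    · omega
    · have := hmax _ h h'
      omega
  obtain ⟨f, hf⟩ : ∃ f, x + y = f + 1 := ⟨x + y - 1, by omega⟩
  rw [grd] at hg
  nth_rewrite 1 [hf] at hg
  simp only [grdAux, hcm] at hg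
  rw [if_neg (by omega), show x + y - w = r by omega] at hg
  by_cases hr : r = 0
  · exact Or.inl hr
  right
  obtain ⟨f', rfl⟩ : ∃ f', f = f' + 1 := ⟨f - 1, by omega⟩
  have c1 := le_coinMax C r 1 h1 (by omega)
  rcases coinMax_mem C r with h | ⟨h, h'⟩
  · omega
  simp only [grdAux] at hg
  rw [if_neg (by omega)] at hg
  by_cases hr2 : r - coinMax C r = 0
  · rwa [show r = coinMax C r by omega]
  exfalso
  obtain ⟨f'', rfl⟩ : ∃ f'', f' = f'' + 1 := ⟨f' - 1, by omega⟩
  have c2 := le_coinMax C (r - coinMax C r) 1 h1 (by omega)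
  simp only [grdAux] at hg
  rw [if_neg (by omega)] at hg
  omega

theorem stmt_10 (C : List ℕ) (hchain : List.Chain' (· < ·) C)
    (hhead : C.getD 0 0 = 1) (hord : Orderly C)
    (m : ℕ) (hm : 3 ≤ m) (hmn : m ≤ C.length)
    (h1 : 2 * C.getD (m - 3) 0 < C.getD (m - 2) 0)
    (h2 : 2 * C.getD (m - 2) 0 < C.getD (m - 1) 0) :
    ∀ t : ℕ, m ≤ t → t < C.length →
      C.getD (m - 1) 0 - C.getD (m - 2) 0 ≤ C.getD t 0 - C.getD (t - 1) 0 := by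
  intro t hmt ht
  have hpw : C.Pairwise (· < ·) := List.isChain_iff_pairwise.1 hchain
  have hmono : ∀ i j, i < j → j < C.length → C.getD i 0 < C.getD j 0 := by
    intro i j hij hj
    rw [List.getD_eq_getElem _ _ hj, List.getD_eq_getElem _ _ (hij.trans hj)]
    exact List.pairwise_iff_getElem.1 hpw i j _ _ hij
  have hmem : ∀ i, i < C.length → C.getD i 0 ∈ C := by
    intro i hi
    rw [List.getD_eq_getElem _ _ hi]
    exact List.getElem_mem hi
  have hidx : ∀ x ∈ C, ∃ i, i < C.length ∧ C.getD i 0 = x := by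
    intro x hx
    obtain ⟨i, hi, h⟩ := List.mem_iff_getElem.1 hx
    exact ⟨i, hi, by rw [List.getD_eq_getElem _ _ hi, h]⟩
  have hle : ∀ i j, i ≤ j → j < C.length → C.getD i 0 ≤ C.getD j 0 := by
    intro i j hij hj
    rcases hij.eq_or_lt with rfl | h
    · exact le_rfl
    · exact (hmono i j h hj).le
  have hone : 1 ∈ C := hhead ▸ hmem 0 (by omega)
  have hpos : ∀ x ∈ C, 0 < x := by
    intro x hx
    obtain ⟨i, hi, rfl⟩ := hidx x hx
    have := hle 0 i (by omega) hi
    omega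
  by_contra hcon
  have hl := hmono (t - 1) t (by omega) ht
  have hl2 := hle (m - 1) (t - 1) (by omega) (by omega)
  refine core (· ∈ C) (C.getD (C.length - 1) 0) (C.getD (m - 3) 0) (C.getD (m - 2) 0)
    (C.getD (m - 1) 0) ?_ (hmem _ (by omega)) (hmem _ (by omega)) h1 h2 ?_ ?_
    (C.getD (t - 1) 0) (C.getD t 0) (hmem _ (by omega)) (hmem _ ht) hl2 hl (by omega)
  · intro x hx
    obtain ⟨i, hi, rfl⟩ := hidx x hx
    exact hle _ _ (by omega) (by omega)
  · intro x hx hxc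
    obtain ⟨i, hi, rfl⟩ := hidx x hx
    have hi2 : i < m - 1 := by
      by_contra h
      have := hle (m - 1) i (by omega) hi
      omega
    by_cases h : i = m - 2
    · right; rw [h]
    · left; exact hle _ _ (by omega) (by omega)
  · intro x y w r hx hy hw hs hmax
    exact two_sum C hone hord x y w r hx hy hw hs (hpos w hw) hmax
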